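/- Let p ∈ (1,∞), T ∈ (0,∞), u_0 ∈ L_p(ℝ^d), and f ∈ L_p((0,T); L_p(ℝ^d)). If u and v are both weak solutions of ∂_t w = a^{ij}(t) w_{x^i x^j} + f with w(0) = u_0, both are continuous from [0,T] into L_p(ℝ^d), and both satisfy ∫_0^T |a(t)| ‖w(t,·)‖_{L_p} dt < ∞, then u(t) = v(t) in L_p(ℝ^d) for every t ∈ [0,T]. -/

import Mathlib

open MeasureTheory Set ENNReal

noncomputable section

/-- The partial derivative `∂_{x^i} φ` of a function on `ℝ^d`. -/
def pd {d : ℕ} (i : Fin d) (φ : (Fin d → ℝ) → ℝ) : (Fin d → ℝ) → ℝ :=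
  fun x => fderiv ℝ φ x (Pi.single i 1)

/-- `|a(t)| = max_{i,j} |a^{ij}(t)|`. -/
def aMax {d : ℕ} (a : ℝ → Fin d → Fin d → ℝ) (t : ℝ) : ℝ :=
  ⨆ i, ⨆ j, |a t i j|

/-- `u` is a weak solution of `∂_t u = a^{ij}(t) u_{x^i x^j} + f`, `u(0) = u₀`, on `[0,T]`. -/
def IsWeakSolution {d : ℕ} (p : ℝ≥0∞) (T : ℝ) (a : ℝ → Fin d → Fin d → ℝ)
    (u0 : Lp ℝ p (volume : Measure (Fin d → ℝ)))
    (f u : ℝ → Lp ℝ p (volume : Measure (Fin d → ℝ))) : Prop :=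
  ∀ φ : (Fin d → ℝ) → ℝ, ContDiff ℝ (⊤ : ℕ∞) φ → HasCompactSupport φ →
    ∀ t ∈ Icc (0:ℝ) T,
      (∫ x, u t x * φ x) =
        (∫ x, u0 x * φ x) +
        ∫ s in Ioc (0:ℝ) t,
          ((∑ i, ∑ j, a s i j * ∫ x, u s x * pd i (pd j φ) x)
            + ∫ x, f s x * φ x)



lemma aux_integrable {d : ℕ} {q : ℝ≥0∞} [hq : Fact (1 ≤ q)]
    (w : Lp ℝ q (volume : Measure (Fin d → ℝ))) {ψ : (Fin d → ℝ) → ℝ} (hc : Continuous ψ)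
    (hs : HasCompactSupport ψ) : Integrable (fun y => w y * ψ y) := by
  have h1 : LocallyIntegrable (fun y => w y) (volume : Measure (Fin d → ℝ)) :=
    (Lp.memLp w).locallyIntegrable hq.out
  have := h1.integrable_smul_right_of_hasCompactSupport hc hs
  simpa [smul_eq_mul] using this

lemma aux_bound (d : ℕ) (q : ℝ≥0∞) [hq : Fact (1 ≤ q)] (R : ℝ) :
    ∃ K : ℝ, 0 ≤ K ∧ ∀ (w : Lp ℝ q (volume : Measure (Fin d → ℝ))) (ψ : (Fin d → ℝ) → ℝ)
      (x : Fin d → ℝ) (M : ℝ), (∀ y, |ψ y| ≤ M) → (∀ y, y ∉ Metric.closedBall x R → ψ y = 0) →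
      |∫ y, w y * ψ y| ≤ M * K * ‖w‖ := by
  set B : ℝ≥0∞ := volume (Metric.closedBall (0 : Fin d → ℝ) R) ^ (1 / (1:ℝ≥0∞).toReal - 1 / q.toReal) with hB
  have hBfin : B ≠ ∞ := by
    apply ENNReal.rpow_ne_top_of_nonneg
    · rcases eq_or_ne q ∞ with h | h
      · simp [h]
      · have : 1 ≤ q.toReal := by
          have := ENNReal.toReal_mono h hq.out
          simpa using this
        simp
        exact inv_le_one_of_one_le₀ this
    · exact (isCompact_closedBall _ _).measure_lt_top.ne
  refine ⟨B.toReal, ENNReal.toReal_nonneg, fun w ψ x M hM hs => ?_⟩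
  have hM0 : 0 ≤ M := (abs_nonneg _).trans (hM 0)
  have hcb : volume (Metric.closedBall x R) = volume (Metric.closedBall (0 : Fin d → ℝ) R) :=
    Measure.addHaar_closedBall_center _ _ _
  have e1 : ∫ y, w y * ψ y = ∫ y in Metric.closedBall x R, w y * ψ y := by
    symm
    apply setIntegral_eq_integral_of_forall_compl_eq_zero
    intro y hy
    simp [hs y hy]
  have hloc : IntegrableOn (fun y => w y) (Metric.closedBall x R) :=
    ((Lp.memLp w).locallyIntegrable hq.out).integrableOn_isCompact (isCompact_closedBall _ _)
  have h2 : eLpNorm (fun y => w y) 1 (volume.restrict (Metric.closedBall x R)) ≤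
      ENNReal.ofReal ‖w‖ * B := by
    refine (eLpNorm_le_eLpNorm_mul_rpow_measure_univ hq.out
      (Lp.aestronglyMeasurable w).restrict).trans ?_
    rw [Measure.restrict_apply_univ, hcb, ← hB]
    gcongr
    rw [Lp.norm_def, ENNReal.ofReal_toReal (Lp.eLpNorm_ne_top w)]
    exact eLpNorm_mono_measure _ Measure.restrict_le_self
  have h3 : ∫ y in Metric.closedBall x R, ‖w y‖ ≤ ‖w‖ * B.toReal := by
    rw [integral_norm_eq_lintegral_enorm hloc.aestronglyMeasurable, ← eLpNorm_one_eq_lintegral_enorm]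
    have := ENNReal.toReal_mono (ENNReal.mul_ne_top ENNReal.ofReal_ne_top hBfin) h2
    rwa [ENNReal.toReal_mul, ENNReal.toReal_ofReal (norm_nonneg _)] at this
  rw [e1, ← Real.norm_eq_abs]
  calc ‖∫ y in Metric.closedBall x R, w y * ψ y‖
      ≤ ∫ y in Metric.closedBall x R, M * ‖w y‖ := by
        apply norm_integral_le_of_norm_le (hloc.norm.const_mul M)
        refine Filter.Eventually.of_forall fun y => ?_
        rw [norm_mul, mul_comm]
        exact mul_le_mul_of_nonneg_right (hM y) (norm_nonneg _)
    _ = M * ∫ y in Metric.closedBall x R, ‖w y‖ := integral_const_mul _ _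
    _ ≤ M * (‖w‖ * B.toReal) := by gcongr
    _ = _ := by ring

def pairL {d : ℕ} {q : ℝ≥0∞} [hq : Fact (1 ≤ q)]
    (ψ : (Fin d → ℝ) → ℝ) (hc : Continuous ψ)
    (hs : HasCompactSupport ψ) : Lp ℝ q (volume : Measure (Fin d → ℝ)) →ₗ[ℝ] ℝ where
  toFun w := ∫ y, w y * ψ y
  map_add' w w' := by
    rw [← integral_add (aux_integrable w hc hs) (aux_integrable w' hc hs)]
    apply integral_congr_ae
    filter_upwards [Lp.coeFn_add w w'] with y hy
    rw [hy, Pi.add_apply]; ring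
  map_smul' c w := by
    rw [RingHom.id_apply, smul_eq_mul, ← integral_const_mul]
    apply integral_congr_ae
    filter_upwards [Lp.coeFn_smul c w] with y hy
    rw [hy, Pi.smul_apply, smul_eq_mul]; ring

lemma supp_ball {d : ℕ} {ψ : (Fin d → ℝ) → ℝ} (hs : HasCompactSupport ψ) :
    ∃ R : ℝ, 0 ≤ R ∧ ∀ y, y ∉ Metric.closedBall 0 R → ψ y = 0 := by
  obtain ⟨R, hR⟩ := hs.isCompact.isBounded.subset_closedBall 0
  refine ⟨max R 0, le_max_right _ _, fun y hy => ?_⟩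
  by_contra h
  exact hy (Metric.closedBall_subset_closedBall (le_max_left _ _) (hR (subset_tsupport _ h)))

lemma pair_cont {d : ℕ} {q : ℝ≥0∞} [hq : Fact (1 ≤ q)]
    (ψ : (Fin d → ℝ) → ℝ) (hc : Continuous ψ) (hs : HasCompactSupport ψ) :
    Continuous (fun w : Lp ℝ q (volume : Measure (Fin d → ℝ)) => ∫ y, w y * ψ y) := by
  obtain ⟨R, -, hR⟩ := supp_ball hs
  obtain ⟨M, hM⟩ := hc.bounded_above_of_compact_support hs
  obtain ⟨K, -, hK⟩ := aux_bound d q R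
  exact ((pairL ψ hc hs).mkContinuous (M * K) (fun w => hK w ψ 0 M hM hR)).continuous

lemma hasDerivAt_line {d : ℕ} {ψ : (Fin d → ℝ) → ℝ} (hψ : Differentiable ℝ ψ)
    (y h : Fin d → ℝ) (τ : ℝ) :
    HasDerivAt (fun τ : ℝ => ψ (y + τ • h)) (∑ i, h i * pd i ψ (y + τ • h)) τ := by
  have h1 : HasDerivAt (fun τ : ℝ => y + τ • h) h τ := by
    simpa using ((hasDerivAt_id τ).smul_const h).const_add y
  have h2 := (hψ (y + τ • h)).hasFDerivAt.comp_hasDerivAt τ h1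
  refine h2.congr_deriv ?_
  symm
  have h3 : h = ∑ i, h i • (Pi.single i (1:ℝ) : Fin d → ℝ) := by
    ext j
    simp [Finset.sum_apply, Pi.single_apply]
  calc ∑ i, h i * pd i ψ (y + τ • h) = ∑ i, fderiv ℝ ψ (y + τ • h) (h i • (Pi.single i (1:ℝ) : Fin d → ℝ)) := by
        refine Finset.sum_congr rfl fun i _ => ?_
        rw [map_smul, smul_eq_mul, pd]
    _ = _ := by rw [← map_sum, ← h3]

lemma pd_contDiff {d : ℕ} {ψ : (Fin d → ℝ) → ℝ} (hψ : ContDiff ℝ (⊤ : ℕ∞) ψ) (i : Fin d) :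
    ContDiff ℝ (⊤ : ℕ∞) (pd i ψ) := by
  have : ContDiff ℝ (⊤ : ℕ∞) (fderiv ℝ ψ) := hψ.fderiv_right (by simp)
  exact this.clm_apply contDiff_const

lemma pd_supp {d : ℕ} {ψ : (Fin d → ℝ) → ℝ} (hψ : HasCompactSupport ψ) (i : Fin d) :
    HasCompactSupport (pd i ψ) := hψ.fderiv_apply ℝ _

lemma pd_trans {d : ℕ} (ψ : (Fin d → ℝ) → ℝ) (i : Fin d) (x : Fin d → ℝ) :
    pd i (fun y => ψ (y - x)) = fun y => pd i ψ (y - x) := by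
  ext y
  simp only [pd]
  rw [fderiv_comp_sub]

lemma taylor {d : ℕ} {φ : (Fin d → ℝ) → ℝ} (hφ : ContDiff ℝ (⊤ : ℕ∞) φ)
    (hs : HasCompactSupport φ) (ε : ℝ) (hε : 0 < ε) :
    ∃ δ > 0, ∀ y h : Fin d → ℝ, ‖h‖ ≤ δ →
      |φ (y + h) + φ (y - h) - 2 * φ y - ∑ j, ∑ i, h j * h i * pd i (pd j φ) y| ≤ ε * ‖h‖ ^ 2 := by
  -- uniform continuity
  obtain ⟨ε', hε', hεε⟩ : ∃ ε' > 0, 2 * (∑ j : Fin d, ∑ i : Fin d, ε') ≤ ε := by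
    refine ⟨ε / (2 * (d * d) + 1), by positivity, ?_⟩
    simp only [Finset.sum_const, Finset.card_univ, Fintype.card_fin, nsmul_eq_mul]
    rw [show 2 * ((d:ℝ) * (d * (ε / (2 * (d * d) + 1)))) = ε * ((2 * (d * d)) / (2 * (d * d) + 1)) by ring]
    have : (2 * ((d:ℝ) * d)) / (2 * (d * d) + 1) ≤ 1 := by
      rw [div_le_one (by positivity)]; linarith
    nlinarith
  have huc : UniformContinuous (fun y : Fin d → ℝ => fun j i => pd i (pd j φ) y) := by
    refine uniformContinuous_pi.2 fun j => uniformContinuous_pi.2 fun i => ?_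
    exact (pd_supp (pd_supp hs j) i).uniformContinuous_of_continuous
        (pd_contDiff (pd_contDiff hφ j) i).continuous
  obtain ⟨δ, hδ, hd⟩ := Metric.uniformContinuous_iff.1 huc ε' hε'
  have hD : ∀ y z : Fin d → ℝ, ‖y - z‖ < δ → ∀ j i,
      |pd i (pd j φ) y - pd i (pd j φ) z| ≤ ε' := fun y z hyz j i => by
    have := hd (by rwa [dist_eq_norm] : dist y z < δ)
    have h2 := dist_le_pi_dist ((fun j i => pd i (pd j φ) y) : Fin d → Fin d → ℝ)
      (fun j i => pd i (pd j φ) z) j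
    have h3 := dist_le_pi_dist ((fun i => pd i (pd j φ) y) : Fin d → ℝ)
      (fun i => pd i (pd j φ) z) i
    rw [← Real.dist_eq]
    linarith
  refine ⟨δ / 2, by positivity, fun y h hh => ?_⟩
  set H := ∑ j, ∑ i, h j * h i * pd i (pd j φ) y with hH
  have hdiff : Differentiable ℝ φ := hφ.differentiable (by simp)
  have hdiff1 : ∀ j, Differentiable ℝ (pd j φ) := fun j => (pd_contDiff hφ j).differentiable (by simp)
  let k : ℝ → ℝ := fun τ => φ (y + τ • h) + φ (y + τ • (-h)) - 2 * φ y - τ ^ 2 * H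
  let k1 : ℝ → ℝ := fun τ => (∑ j, h j * pd j φ (y + τ • h)) + (∑ j, (-h) j * pd j φ (y + τ • (-h)))
    - 2 * τ * H
  let k2 : ℝ → ℝ := fun τ => (∑ j, h j * ∑ i, h i * pd i (pd j φ) (y + τ • h))
    + (∑ j, (-h) j * ∑ i, (-h) i * pd i (pd j φ) (y + τ • (-h))) - 2 * H
  have hk : ∀ τ, HasDerivAt k (k1 τ) τ := fun τ => by
    have := (((hasDerivAt_line hdiff y h τ).add (hasDerivAt_line hdiff y (-h) τ)).sub_const
      (2 * φ y)).sub ((hasDerivAt_pow 2 τ).mul_const H)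
    refine this.congr_deriv ?_
    simp [k1]
  have hk1 : ∀ τ, HasDerivAt k1 (k2 τ) τ := fun τ => by
    have a1 := HasDerivAt.fun_sum (u := Finset.univ) (fun j _ =>
      (hasDerivAt_line (hdiff1 j) y h τ).const_mul (h j))
    have a2 := HasDerivAt.fun_sum (u := Finset.univ) (fun j _ =>
      (hasDerivAt_line (hdiff1 j) y (-h) τ).const_mul ((-h) j))
    have a3 := ((hasDerivAt_id τ).const_mul 2).mul_const H
    refine ((a1.add a2).sub a3).congr_deriv ?_
    simp [k2]
  have hsmall : ∀ τ ∈ Icc (0:ℝ) 1, ∀ g : Fin d → ℝ, ‖g‖ = ‖h‖ → ‖(y + τ • g) - y‖ < δ := by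
    intro τ hτ g hg
    rw [add_sub_cancel_left, norm_smul, Real.norm_eq_abs, abs_of_nonneg hτ.1, hg]
    have : τ * ‖h‖ ≤ 1 * ‖h‖ := mul_le_mul_of_nonneg_right hτ.2 (norm_nonneg _)
    linarith
  have hk2 : ∀ τ ∈ Icc (0:ℝ) 1, ‖k2 τ‖ ≤ ε * ‖h‖ ^ 2 := by
    intro τ hτ
    have e : k2 τ = ∑ j, ∑ i, h j * h i * ((pd i (pd j φ) (y + τ • h) - pd i (pd j φ) y) +
        (pd i (pd j φ) (y + τ • (-h)) - pd i (pd j φ) y)) := by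
      simp only [k2, hH, Finset.mul_sum, ← Finset.sum_add_distrib, ← Finset.sum_sub_distrib]
      refine Finset.sum_congr rfl fun j _ => Finset.sum_congr rfl fun i _ => ?_
      simp only [Pi.neg_apply]
      ring
    rw [e, Real.norm_eq_abs]
    calc _ ≤ ∑ j : Fin d, ∑ i : Fin d, ‖h‖ * ‖h‖ * (ε' + ε') := by
          refine (Finset.abs_sum_le_sum_abs _ _).trans (Finset.sum_le_sum fun j _ => ?_)
          refine (Finset.abs_sum_le_sum_abs _ _).trans (Finset.sum_le_sum fun i _ => ?_)
          rw [abs_mul, abs_mul]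
          have b1 : |h j| ≤ ‖h‖ := norm_le_pi_norm h j
          have b2 : |h i| ≤ ‖h‖ := norm_le_pi_norm h i
          have b3 := hD _ _ (hsmall τ hτ h rfl) j i
          have b4 := hD _ _ (hsmall τ hτ (-h) (norm_neg h)) j i
          have b5 := (abs_add_le _ _).trans (add_le_add b3 b4)
          gcongr
      _ = (2 * ∑ j : Fin d, ∑ i : Fin d, ε') * ‖h‖ ^ 2 := by
          simp only [Finset.sum_const, nsmul_eq_mul]; ring
      _ ≤ _ := by gcongr
  have hk1z : k1 0 = 0 := by simp [k1]
  have hkz : k 0 = 0 := by simp [k]; ring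
  have m1 : ∀ τ ∈ Icc (0:ℝ) 1, ‖k1 τ‖ ≤ ε * ‖h‖ ^ 2 := by
    intro τ hτ
    have := (convex_Icc (0:ℝ) 1).norm_image_sub_le_of_norm_hasDerivWithin_le
      (fun x _ => (hk1 x).hasDerivWithinAt) hk2 (left_mem_Icc.2 zero_le_one) hτ
    rw [hk1z, sub_zero, sub_zero, Real.norm_eq_abs τ, abs_of_nonneg hτ.1] at this
    refine this.trans (mul_le_of_le_one_right (by positivity) hτ.2)
  have := (convex_Icc (0:ℝ) 1).norm_image_sub_le_of_norm_hasDerivWithin_le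
      (fun x _ => (hk x).hasDerivWithinAt) m1 (left_mem_Icc.2 zero_le_one)
      (right_mem_Icc.2 zero_le_one)
  rw [hkz] at this
  simpa [k, sub_eq_add_neg] using this

lemma shift_cont {d : ℕ} {ψ : (Fin d → ℝ) → ℝ} (hc : Continuous ψ) (x : Fin d → ℝ) :
    Continuous (fun y => ψ (y - x)) := hc.comp (continuous_id.sub continuous_const)

lemma shift_supp {d : ℕ} {ψ : (Fin d → ℝ) → ℝ} (hs : HasCompactSupport ψ) (x : Fin d → ℝ) :
    HasCompactSupport (fun y => ψ (y - x)) :=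
  hs.comp_homeomorph (Homeomorph.subRight x)

lemma pair_shift_bound {d : ℕ} {q : ℝ≥0∞} [hq : Fact (1 ≤ q)] {ψ : (Fin d → ℝ) → ℝ}
    (hc : Continuous ψ) (hs : HasCompactSupport ψ) :
    ∃ C : ℝ, 0 ≤ C ∧ ∀ (w : Lp ℝ q (volume : Measure (Fin d → ℝ))) x,
      |∫ y, w y * ψ (y - x)| ≤ C * ‖w‖ := by
  obtain ⟨R, -, hR⟩ := supp_ball hs
  obtain ⟨M, hM⟩ := hc.bounded_above_of_compact_support hs
  obtain ⟨K, hK0, hK⟩ := aux_bound d q R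
  refine ⟨M * K, mul_nonneg ((norm_nonneg _).trans (hM 0)) hK0, fun w x => ?_⟩
  refine hK w _ x M (fun y => hM _) fun y hy => hR _ ?_
  simpa [dist_eq_norm] using hy

lemma taylor_pair {d : ℕ} (q : ℝ≥0∞) [hq : Fact (1 ≤ q)] {φ : (Fin d → ℝ) → ℝ}
    (hφ : ContDiff ℝ (⊤ : ℕ∞) φ) (hs : HasCompactSupport φ) (ε : ℝ) (hε : 0 < ε) :
    ∃ δ > 0, ∀ (w : Lp ℝ q (volume : Measure (Fin d → ℝ))) (x h : Fin d → ℝ), ‖h‖ ≤ δ →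
      |(∫ y, w y * φ (y - (x - h))) + (∫ y, w y * φ (y - (x + h))) - 2 * (∫ y, w y * φ (y - x))
        - ∑ j, ∑ i, h j * h i * ∫ y, w y * pd i (pd j φ) (y - x)| ≤ ε * ‖h‖ ^ 2 * ‖w‖ := by
  obtain ⟨R, hR0, hR⟩ := supp_ball hs
  obtain ⟨K, hK0, hK⟩ := aux_bound d q (R + 1)
  obtain ⟨δ, hδ, ht⟩ := taylor hφ hs (ε / (K + 1)) (by positivity)
  refine ⟨min δ 1, by positivity, fun w x h hh => ?_⟩
  have hh1 : ‖h‖ ≤ 1 := hh.trans (min_le_right _ _)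
  have hpd : ∀ j i y, y ∉ Metric.closedBall 0 R → pd i (pd j φ) y = 0 := by
    have hgen : ∀ ψ : (Fin d → ℝ) → ℝ, (∀ y, y ∉ Metric.closedBall 0 R → ψ y = 0) →
        ∀ i y, y ∉ Metric.closedBall 0 R → pd i ψ y = 0 := by
      intro ψ hψ i y hy
      have : ψ =ᶠ[nhds y] fun _ => 0 := by
        filter_upwards [Metric.isClosed_closedBall.isOpen_compl.mem_nhds hy] with z hz
        exact hψ z hz
      simp [pd, this.fderiv_eq]
    exact fun j i => hgen _ (hgen _ hR j) i
  have b := hK w (fun y => φ (y - (x - h)) + φ (y - (x + h)) - 2 * φ (y - x)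
    - ∑ j, ∑ i, h j * h i * pd i (pd j φ) (y - x)) x (ε / (K + 1) * ‖h‖ ^ 2) ?_ ?_
  · have hc := hφ.continuous
    have i1 := aux_integrable w (shift_cont hc (x - h)) (shift_supp hs (x - h))
    have i2 := aux_integrable w (shift_cont hc (x + h)) (shift_supp hs (x + h))
    have i3 := aux_integrable w (shift_cont hc x) (shift_supp hs x)
    have i4 := fun j i => aux_integrable w
      (shift_cont (pd_contDiff (pd_contDiff hφ j) i).continuous x)
      (shift_supp (pd_supp (pd_supp hs j) i) x)
    have i5 := fun j i => (i4 j i).const_mul (h j * h i)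
    have i6 := fun j => integrable_finsetSum Finset.univ (fun i _ => i5 j i)
    have i7 := integrable_finsetSum Finset.univ (fun j _ => i6 j)
    have e : ∫ y, w y * (φ (y - (x - h)) + φ (y - (x + h)) - 2 * φ (y - x)
        - ∑ j, ∑ i, h j * h i * pd i (pd j φ) (y - x)) =
        (∫ y, w y * φ (y - (x - h))) + (∫ y, w y * φ (y - (x + h))) - 2 * (∫ y, w y * φ (y - x))
        - ∑ j, ∑ i, h j * h i * ∫ y, w y * pd i (pd j φ) (y - x) := by
      simp_rw [← integral_const_mul]
      simp_rw [← integral_finsetSum Finset.univ (fun i _ => i5 _ i)]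
      rw [← integral_finsetSum Finset.univ (fun j _ => i6 j), ← integral_add i1 i2]
      have i8 : Integrable (fun y => w y * φ (y - (x - h)) + w y * φ (y - (x + h))) := i1.add i2
      rw [← integral_sub i8 (i3.const_mul 2)]
      have i9 : Integrable (fun y => w y * φ (y - (x - h)) + w y * φ (y - (x + h))
        - 2 * (w y * φ (y - x))) := i8.sub (i3.const_mul 2)
      rw [← integral_sub i9 i7]
      congr 1
      ext y
      simp only [mul_sub, mul_add, Finset.mul_sum]
      congr 1
      · ring
      · refine Finset.sum_congr rfl fun j _ => Finset.sum_congr rfl fun i _ => ?_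
        ring
    rw [e] at b
    refine b.trans ?_
    refine mul_le_mul_of_nonneg_right ?_ (norm_nonneg _)
    rw [show ε / (K + 1) * ‖h‖ ^ 2 * K = (ε * ‖h‖ ^ 2) * (K / (K + 1)) by ring]
    refine mul_le_of_le_one_right (by positivity) ?_
    rw [div_le_one (by positivity)]; linarith
  · intro y
    have := ht (y - x) h (hh.trans (min_le_left _ _))
    rwa [show y - (x - h) = y - x + h by abel, show y - (x + h) = y - x - h by abel]
  · intro y hy
    have hy' : R + 1 < ‖y - x‖ := by simpa [dist_eq_norm] using hy
    have g : ∀ z, ‖z‖ ≤ 1 → y - x + z ∉ Metric.closedBall 0 R := by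
      intro z hz
      simp only [mem_closedBall_zero_iff, not_le]
      have := norm_sub_le (y - x + z) z
      rw [add_sub_cancel_right] at this
      linarith
    have g0 : y - x ∉ Metric.closedBall 0 R := by simpa using g 0 (by simp)
    have g1 := hR _ (g h hh1)
    have g2 := hR _ (g (-h) (by simpa using hh1))
    rw [show y - (x - h) = y - x + h by abel, show y - (x + h) = y - x + -h by abel]
    rw [g1, g2, hR _ g0]
    simp [hpd _ _ _ g0]

lemma psd_decomp {d : ℕ} (Q : Fin d → Fin d → ℝ) (hsymm : ∀ i j, Q i j = Q j i)
    (hpos : ∀ ξ : Fin d → ℝ, 0 ≤ ∑ i, ∑ j, Q i j * ξ i * ξ j) :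
    ∃ g : Fin d → Fin d → ℝ, ∀ i j, Q i j = ∑ k, g k i * g k j := by
  have hp : (Matrix.of Q).PosSemidef := by
    refine Matrix.PosSemidef.of_dotProduct_mulVec_nonneg ?_ ?_
    · ext i j
      simp [hsymm i j]
    · intro x
      have e : star x ⬝ᵥ (Matrix.of Q).mulVec x = ∑ i, ∑ j, Q i j * x i * x j := by
        simp only [dotProduct, Matrix.mulVec, Finset.mul_sum]
        refine Finset.sum_congr rfl fun j _ => Finset.sum_congr rfl fun i _ => ?_
        rw [Pi.star_apply, star_trivial, Matrix.of_apply]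
        ring
      rw [e]
      exact hpos x
  obtain ⟨B, hB⟩ : ∃ B : Matrix (Fin d) (Fin d) ℝ, Matrix.of Q = B.conjTranspose * B := by
    open scoped MatrixOrder in
    obtain ⟨X, hX, -, hXX⟩ :=
      CFC.exists_sqrt_of_isSelfAdjoint_of_quasispectrumRestricts hp.isHermitian
        (QuasispectrumRestricts.nnreal_of_nonneg hp.nonneg)
    have h2 : X.conjTranspose = X := hX.star_eq
    refine ⟨X, ?_⟩
    rw [h2, hXX]; rfl
  refine ⟨B, fun i j => ?_⟩
  have := congrFun (congrFun hB i) j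
  simpa [Matrix.mul_apply] using this

lemma abs_le_aMax {d : ℕ} (a : ℝ → Fin d → Fin d → ℝ) (t : ℝ) (i j : Fin d) :
    |a t i j| ≤ aMax a t :=
  (le_ciSup (f := fun j => |a t i j|) (Set.finite_range _).bddAbove j).trans
    (le_ciSup (f := fun i => ⨆ j, |a t i j|) (Set.finite_range _).bddAbove i)

lemma aMax_nonneg {d : ℕ} (a : ℝ → Fin d → Fin d → ℝ) (t : ℝ) : 0 ≤ aMax a t :=
  Real.iSup_nonneg fun _ => Real.iSup_nonneg fun _ => abs_nonneg _

lemma aMax_meas {d : ℕ} {a : ℝ → Fin d → Fin d → ℝ}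
    (ha : ∀ i j, Measurable fun t => a t i j) : Measurable (aMax a) :=
  Measurable.iSup fun i => Measurable.iSup fun j => (ha i j).abs

lemma int_split {f : ℝ → ℝ} {r s t : ℝ} (h1 : r ≤ s) (h2 : s ≤ t)
    (hf : IntegrableOn f (Ioc r t)) :
    ∫ x in Ioc r t, f x = (∫ x in Ioc r s, f x) + ∫ x in Ioc s t, f x := by
  rw [← Ioc_union_Ioc_eq_Ioc h1 h2]
  refine setIntegral_union ?_ measurableSet_Ioc (hf.mono_set (Ioc_subset_Ioc_right h2))
    (hf.mono_set (Ioc_subset_Ioc_left h1))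
  exact Set.disjoint_left.2 fun x hx hy => absurd hx.2 (not_le.2 hy.1)

/-- One short time step of the maximum principle. -/
lemma one_step {d : ℕ} (hd : 0 < d) {q : ℝ≥0∞} [hq : Fact (1 ≤ q)]
    {a : ℝ → Fin d → Fin d → ℝ} {s0 t0 : ℝ}
    (ha_meas : ∀ i j, Measurable fun t => a t i j)
    (ha_symm : ∀ t ∈ Ioc s0 t0, ∀ i j, a t i j = a t j i)
    (ha_pos : ∀ t ∈ Ioc s0 t0, ∀ ξ : Fin d → ℝ, 0 ≤ ∑ i, ∑ j, a t i j * ξ i * ξ j)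
    {w : ℝ → Lp ℝ q (volume : Measure (Fin d → ℝ))}
    (hw : ContinuousOn w (Icc s0 t0)) (hA : IntegrableOn (aMax a) (Ioc s0 t0))
    {φ : (Fin d → ℝ) → ℝ} (hφ : ContDiff ℝ (⊤ : ℕ∞) φ) (hs : HasCompactSupport φ)
    (heq : ∀ x, ∀ s t, s0 ≤ s → s ≤ t → t ≤ t0 →
      (∫ y, w t y * φ (y - x)) = (∫ y, w s y * φ (y - x)) +
        ∫ r in Ioc s t, ∑ i, ∑ j, a r i j * ∫ y, w r y * pd i (pd j φ) (y - x))
    (ε : ℝ) (hε : 0 < ε) :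
    ∃ δ > 0, ∀ s t, s0 ≤ s → s ≤ t → t ≤ t0 → t - s < δ → ∀ m,
      (∀ x, (∫ y, w s y * φ (y - x)) ≤ m) →
      ∀ x, (∫ y, w t y * φ (y - x)) ≤ m + ε * ∫ r in Ioc s t, aMax a r := by
  have hdR : (0:ℝ) < d := by exact_mod_cast hd
  -- constants
  have hCij : ∀ i j, ∃ C : ℝ, 0 ≤ C ∧ ∀ (w : Lp ℝ q (volume : Measure (Fin d → ℝ))) x,
      |∫ y, w y * pd i (pd j φ) (y - x)| ≤ C * ‖w‖ := fun i j =>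
    pair_shift_bound (pd_contDiff (pd_contDiff hφ j) i).continuous (pd_supp (pd_supp hs j) i)
  choose C hC0 hC using hCij
  set Ct := ∑ i, ∑ j, C i j with hCt
  have hCt0 : 0 ≤ Ct := Finset.sum_nonneg fun i _ => Finset.sum_nonneg fun j _ => hC0 i j
  obtain ⟨W, hW⟩ := isCompact_Icc.exists_bound_of_continuousOn hw
  have hW' : ∀ t ∈ Icc s0 t0, ‖w t‖ ≤ |W| := fun t ht => (hW t ht).trans (le_abs_self _)
  obtain ⟨δ1, hδ1, ht⟩ := taylor_pair q hφ hs (ε / (2 * (d * |W| + 1))) (by positivity)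
  set ε1 := ε / (2 * (d * |W| + 1)) with hε1
  set ε2 := ε / (2 * (Ct + 1)) with hε2
  have hε10 : 0 < ε1 := by positivity
  have hε20 : 0 < ε2 := by positivity
  have hAI : IntegrableOn (aMax a) (Icc s0 t0) := by
    rwa [integrableOn_Icc_iff_integrableOn_Ioc]
  have hFc := intervalIntegral.continuousOn_primitive hAI
  have u1 := Metric.uniformContinuousOn_iff.1 (isCompact_Icc.uniformContinuousOn_of_continuous hw)
    ε2 hε20
  have u2 := Metric.uniformContinuousOn_iff.1 (isCompact_Icc.uniformContinuousOn_of_continuous hFc)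
    (δ1 ^ 2 / (2 * d * d)) (by positivity)
  obtain ⟨δ2, hδ2, u1⟩ := u1
  obtain ⟨δ3, hδ3, u2⟩ := u2
  refine ⟨min δ2 δ3, by positivity, fun s t hs0 hst ht0 hδ m hm x => ?_⟩
  have hsI : s ∈ Icc s0 t0 := ⟨hs0, hst.trans ht0⟩
  have htI : t ∈ Icc s0 t0 := ⟨hs0.trans hst, ht0⟩
  have hsub : Ioc s t ⊆ Ioc s0 t0 := Ioc_subset_Ioc hs0 ht0
  have hsubI : Icc s t ⊆ Icc s0 t0 := Icc_subset_Icc hs0 ht0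
  have hAst : IntegrableOn (aMax a) (Ioc s t) := hA.mono_set hsub
  set B := ∫ r in Ioc s t, aMax a r with hB
  have hB0 : 0 ≤ B := integral_nonneg fun r => aMax_nonneg a r
  have hBs : B < δ1 ^ 2 / (2 * d * d) := by
    have h1 := u2 t htI s hsI (by
      rw [Real.dist_eq, abs_of_nonneg (by linarith)]
      exact hδ.trans_le (min_le_right _ _))
    rw [int_split hs0 hst (hA.mono_set (Ioc_subset_Ioc_right ht0)), Real.dist_eq,
      add_sub_cancel_left] at h1
    exact (le_abs_self _).trans_lt h1
  have haI : ∀ i j, IntegrableOn (fun r => a r i j) (Ioc s t) := fun i j =>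
    Integrable.mono' hAst (ha_meas i j).aestronglyMeasurable
      (Filter.Eventually.of_forall fun r => abs_le_aMax a r i j)
  set Q : Fin d → Fin d → ℝ := fun i j => ∫ r in Ioc s t, a r i j with hQ
  have hQB : ∀ i j, |Q i j| ≤ B := fun i j => by
    rw [← Real.norm_eq_abs]
    exact norm_integral_le_of_norm_le hAst (Filter.Eventually.of_forall fun r => abs_le_aMax a r i j)
  have hQsymm : ∀ i j, Q i j = Q j i := fun i j =>
    setIntegral_congr_fun measurableSet_Ioc fun r hr => ha_symm r (hsub hr) i j
  have hQpos : ∀ ξ : Fin d → ℝ, 0 ≤ ∑ i, ∑ j, Q i j * ξ i * ξ j := by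
    intro ξ
    have i1 := fun i j => ((haI i j).mul_const (ξ i)).mul_const (ξ j)
    have i2 := fun i => integrable_finsetSum Finset.univ (fun j _ => i1 i j)
    have e : ∑ i, ∑ j, Q i j * ξ i * ξ j = ∫ r in Ioc s t, ∑ i, ∑ j, a r i j * ξ i * ξ j := by
      rw [integral_finsetSum Finset.univ (fun i _ => i2 i)]
      refine Finset.sum_congr rfl fun i _ => ?_
      rw [integral_finsetSum Finset.univ (fun j _ => i1 i j)]
      refine Finset.sum_congr rfl fun j _ => ?_
      rw [integral_mul_const, integral_mul_const]
    rw [e]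
    exact setIntegral_nonneg measurableSet_Ioc fun r hr => ha_pos r (hsub hr) ξ
  obtain ⟨g, hg⟩ := psd_decomp Q hQsymm hQpos
  -- sizes of the directions
  have hgk : ∀ k, ‖g k‖ ^ 2 ≤ ∑ i, g k i * g k i := by
    intro k
    have hn : 0 ≤ ∑ i, g k i * g k i := Finset.sum_nonneg fun i _ => mul_self_nonneg _
    have : ‖g k‖ ≤ Real.sqrt (∑ i, g k i * g k i) := by
      refine (pi_norm_le_iff_of_nonneg (Real.sqrt_nonneg _)).2 fun i => ?_
      rw [Real.norm_eq_abs, ← Real.sqrt_mul_self_eq_abs]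
      exact Real.sqrt_le_sqrt (Finset.single_le_sum (f := fun i => g k i * g k i)
        (fun i _ => mul_self_nonneg _) (Finset.mem_univ i))
    calc ‖g k‖ ^ 2 ≤ Real.sqrt (∑ i, g k i * g k i) ^ 2 := by gcongr
      _ = _ := Real.sq_sqrt hn
  have hgs : ∑ k, ‖g k‖ ^ 2 ≤ d * B := by
    calc ∑ k, ‖g k‖ ^ 2 ≤ ∑ k, ∑ i, g k i * g k i := Finset.sum_le_sum fun k _ => hgk k
      _ = ∑ i, Q i i := by rw [Finset.sum_comm]; simp_rw [hg]
      _ ≤ ∑ i : Fin d, B := Finset.sum_le_sum fun i _ => (le_abs_self _).trans (hQB i i)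
      _ = d * B := by simp
  set c := Real.sqrt (2 * d) with hc
  have hcc : c * c = 2 * d := Real.mul_self_sqrt (by positivity)
  have hc0 : 0 ≤ c := Real.sqrt_nonneg _
  have hnh : ∀ k, ‖c • g k‖ ^ 2 = 2 * d * ‖g k‖ ^ 2 := fun k => by
    rw [norm_smul, Real.norm_eq_abs, abs_of_nonneg hc0, mul_pow, sq c, hcc]
  have hsm : ∀ k, ‖c • g k‖ ≤ δ1 := by
    intro k
    refine le_of_sq_le_sq ?_ hδ1.le
    rw [hnh]
    have h1 : ‖g k‖ ^ 2 ≤ ∑ k, ‖g k‖ ^ 2 :=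
      Finset.single_le_sum (f := fun k => ‖g k‖ ^ 2) (fun k _ => sq_nonneg _) (Finset.mem_univ k)
    have h2 : ‖g k‖ ^ 2 ≤ d * B := h1.trans hgs
    calc 2 * d * ‖g k‖ ^ 2 ≤ 2 * d * (d * B) := by gcongr
      _ ≤ 2 * d * (d * (δ1 ^ 2 / (2 * d * d))) := by gcongr
      _ = δ1 ^ 2 := by field_simp
  -- spatial estimate
  set G := ∫ y, w s y * φ (y - x) with hG
  set H : Fin d → Fin d → ℝ := fun i j => ∫ y, w s y * pd i (pd j φ) (y - x) with hH
  have hspace : ∑ i, ∑ j, Q i j * H i j ≤ m - G + ε / 2 * B := by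
    have hk : ∀ k, ∑ j, ∑ i, (c • g k) j * (c • g k) i * H i j ≤
        2 * m - 2 * G + ε1 * |W| * (2 * d * ‖g k‖ ^ 2) := by
      intro k
      have h1 := ht (w s) x (c • g k) (hsm k)
      have h2 := (abs_le.1 h1).1
      have h3 := hm (x - c • g k)
      have h4 := hm (x + c • g k)
      have h5 : ε1 * ‖c • g k‖ ^ 2 * ‖w s‖ ≤ ε1 * |W| * (2 * d * ‖g k‖ ^ 2) := by
        have := hW' s hsI
        calc ε1 * ‖c • g k‖ ^ 2 * ‖w s‖ ≤ ε1 * ‖c • g k‖ ^ 2 * |W| := by gcongr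
          _ = _ := by rw [hnh]; ring
      simp only [hH, hG]
      linarith
    have hsum := Finset.sum_le_sum fun k (_ : k ∈ (Finset.univ : Finset (Fin d))) => hk k
    have e1 : ∑ k, ∑ j, ∑ i, (c • g k) j * (c • g k) i * H i j
        = 2 * d * ∑ i, ∑ j, Q i j * H i j := by
      calc ∑ k, ∑ j, ∑ i, (c • g k) j * (c • g k) i * H i j
          = ∑ k, ∑ i, ∑ j, (c • g k) j * (c • g k) i * H i j :=
            Finset.sum_congr rfl fun k _ => Finset.sum_comm
        _ = ∑ i, ∑ k, ∑ j, (c • g k) j * (c • g k) i * H i j := Finset.sum_comm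
        _ = ∑ i, ∑ j, ∑ k, (c • g k) j * (c • g k) i * H i j :=
            Finset.sum_congr rfl fun k _ => Finset.sum_comm
        _ = _ := by
          simp_rw [Finset.mul_sum]
          refine Finset.sum_congr rfl fun i _ => Finset.sum_congr rfl fun j _ => ?_
          rw [hg i j, ← hcc, Finset.sum_mul, Finset.mul_sum]
          refine Finset.sum_congr rfl fun k _ => ?_
          simp only [Pi.smul_apply, smul_eq_mul]
          ring
    have e2 : ∑ k, (2 * m - 2 * G + ε1 * |W| * (2 * d * ‖g k‖ ^ 2)) =
        2 * d * (m - G + ε1 * |W| * ∑ k, ‖g k‖ ^ 2) := by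
      rw [Finset.sum_add_distrib, ← Finset.mul_sum, ← Finset.mul_sum]
      simp
      ring
    rw [e1, e2] at hsum
    have h6 := le_of_mul_le_mul_left hsum (by positivity)
    have h7 : ε1 * |W| * ∑ k, ‖g k‖ ^ 2 ≤ ε1 * |W| * (d * B) := by gcongr
    have h8 : ε1 * |W| * (d * B) ≤ ε / 2 * B := by
      rw [show ε1 * |W| * (d * B) = (ε1 * (d * |W|)) * B by ring]
      gcongr
      rw [hε1, div_mul_eq_mul_div, div_le_div_iff₀ (by positivity) (by positivity)]
      nlinarith
    linarith
  -- time estimate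
  set Hr : ℝ → Fin d → Fin d → ℝ := fun r i j => ∫ y, w r y * pd i (pd j φ) (y - x) with hHr
  have hHc : ∀ i j, ContinuousOn (fun r => Hr r i j) (Icc s t) := fun i j =>
    (pair_cont _ (shift_cont (pd_contDiff (pd_contDiff hφ j) i).continuous x)
      (shift_supp (pd_supp (pd_supp hs j) i) x)).comp_continuousOn (hw.mono hsubI)
  have haH : ∀ i j, IntegrableOn (fun r => a r i j * Hr r i j) (Ioc s t) := fun i j => by
    rw [← integrableOn_Icc_iff_integrableOn_Ioc]
    have h1 : IntegrableOn (fun r => a r i j) (Icc s t) := by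
      rw [integrableOn_Icc_iff_integrableOn_Ioc]
      exact haI i j
    exact h1.mul_continuousOn (hHc i j)
      isCompact_Icc
  have haH0 : ∀ i j, IntegrableOn (fun r => a r i j * H i j) (Ioc s t) := fun i j =>
    (haI i j).mul_const _
  have hdiff : ∀ r ∈ Ioc s t, ∀ i j, |Hr r i j - H i j| ≤ C i j * ε2 := by
    intro r hr i j
    have hlin : Hr r i j - H i j = ∫ y, (w r - w s : Lp ℝ q _) y * pd i (pd j φ) (y - x) :=
      ((pairL _ (shift_cont (pd_contDiff (pd_contDiff hφ j) i).continuous x)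
        (shift_supp (pd_supp (pd_supp hs j) i) x)).map_sub (w r) (w s)).symm
    rw [hlin]
    refine (hC i j _ x).trans ?_
    have := u1 r (hsubI (Ioc_subset_Icc_self hr)) s hsI (by
      rw [Real.dist_eq, abs_of_nonneg (by linarith [hr.1])]
      exact lt_of_le_of_lt (by linarith [hr.2]) (hδ.trans_le (min_le_left _ _)))
    rw [dist_eq_norm] at this
    exact mul_le_mul_of_nonneg_left this.le (hC0 i j)
  have htime : ∫ r in Ioc s t, ∑ i, ∑ j, a r i j * Hr r i j ≤
      ∑ i, ∑ j, Q i j * H i j + ε / 2 * B := by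
    have i1 : IntegrableOn (fun r => ∑ i, ∑ j, a r i j * Hr r i j) (Ioc s t) :=
      integrable_finsetSum _ fun i _ => integrable_finsetSum _ fun j _ => haH i j
    have i2 : IntegrableOn (fun r => ∑ i, ∑ j, a r i j * H i j) (Ioc s t) :=
      integrable_finsetSum _ fun i _ => integrable_finsetSum _ fun j _ => haH0 i j
    have e : ∑ i, ∑ j, Q i j * H i j = ∫ r in Ioc s t, ∑ i, ∑ j, a r i j * H i j := by
      rw [integral_finsetSum Finset.univ
        (fun i _ => integrable_finsetSum _ fun j _ => haH0 i j)]
      refine Finset.sum_congr rfl fun i _ => ?_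
      rw [integral_finsetSum Finset.univ (fun j _ => haH0 i j)]
      refine Finset.sum_congr rfl fun j _ => ?_
      rw [integral_mul_const]
    rw [e, ← integral_const_mul, ← integral_add i2 (hAst.const_mul _)]
    refine setIntegral_mono_on i1 (i2.add (hAst.const_mul _)) measurableSet_Ioc fun r hr => ?_
    have h1 : ∑ i, ∑ j, a r i j * Hr r i j - ∑ i, ∑ j, a r i j * H i j ≤
        ∑ i, ∑ j, aMax a r * (C i j * ε2) := by
      rw [← Finset.sum_sub_distrib]
      refine Finset.sum_le_sum fun i _ => ?_
      rw [← Finset.sum_sub_distrib]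
      refine Finset.sum_le_sum fun j _ => ?_
      rw [← mul_sub]
      refine (le_abs_self _).trans ?_
      rw [abs_mul]
      exact mul_le_mul (abs_le_aMax a r i j) (hdiff r hr i j) (abs_nonneg _) (aMax_nonneg _ _)
    have h2 : ∑ i, ∑ j, aMax a r * (C i j * ε2) = (Ct * ε2) * aMax a r := by
      simp_rw [hCt, Finset.sum_mul]
      refine Finset.sum_congr rfl fun i _ => Finset.sum_congr rfl fun j _ => ?_
      ring
    have h3 : (Ct * ε2) * aMax a r ≤ ε / 2 * aMax a r := by
      refine mul_le_mul_of_nonneg_right ?_ (aMax_nonneg _ _)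
      rw [hε2, mul_div_assoc', div_le_div_iff₀ (by positivity) (by positivity)]
      nlinarith
    linarith
  rw [heq x s t hs0 hst ht0]
  linarith

lemma max_principle {d : ℕ} (hd : 0 < d) {q : ℝ≥0∞} [hq : Fact (1 ≤ q)]
    {a : ℝ → Fin d → Fin d → ℝ} {s0 t0 : ℝ} (hst0 : s0 ≤ t0)
    (ha_meas : ∀ i j, Measurable fun t => a t i j)
    (ha_symm : ∀ t ∈ Ioc s0 t0, ∀ i j, a t i j = a t j i)
    (ha_pos : ∀ t ∈ Ioc s0 t0, ∀ ξ : Fin d → ℝ, 0 ≤ ∑ i, ∑ j, a t i j * ξ i * ξ j)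
    {w : ℝ → Lp ℝ q (volume : Measure (Fin d → ℝ))}
    (hw : ContinuousOn w (Icc s0 t0)) (hA : IntegrableOn (aMax a) (Ioc s0 t0))
    {φ : (Fin d → ℝ) → ℝ} (hφ : ContDiff ℝ (⊤ : ℕ∞) φ) (hs : HasCompactSupport φ)
    (heq : ∀ x, ∀ s t, s0 ≤ s → s ≤ t → t ≤ t0 →
      (∫ y, w t y * φ (y - x)) = (∫ y, w s y * φ (y - x)) +
        ∫ r in Ioc s t, ∑ i, ∑ j, a r i j * ∫ y, w r y * pd i (pd j φ) (y - x))
    (m : ℝ) (hm : ∀ x, (∫ y, w s0 y * φ (y - x)) ≤ m) (x : Fin d → ℝ) :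
    (∫ y, w t0 y * φ (y - x)) ≤ m := by
  set B := ∫ r in Ioc s0 t0, aMax a r with hB
  have hB0 : 0 ≤ B := integral_nonneg fun r => aMax_nonneg a r
  refine le_of_forall_pos_le_add fun ε hε => ?_
  obtain ⟨δ, hδ, hstep⟩ := one_step hd ha_meas ha_symm ha_pos hw hA hφ hs heq (ε / (B + 1))
    (by positivity)
  have hind : ∀ n : ℕ, ∀ t, s0 ≤ t → t ≤ t0 → t - s0 ≤ n * (δ / 2) →
      ∀ x, (∫ y, w t y * φ (y - x)) ≤ m + ε / (B + 1) * ∫ r in Ioc s0 t, aMax a r := by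
    intro n
    induction n with
    | zero =>
      intro t h1 h2 h3 x
      have : t = s0 := by simp at h3; linarith
      subst this
      simpa using hm x
    | succ n ih =>
      intro t h1 h2 h3 x
      have hle : max s0 (t - δ / 2) ≤ t := max_le h1 (by linarith)
      have h4 := ih (max s0 (t - δ / 2)) (le_max_left _ _) (hle.trans h2) (by
        rw [sub_le_iff_le_add]
        push_cast at h3
        refine max_le ?_ (by linarith)
        have : 0 ≤ (n:ℝ) * (δ / 2) := by positivity
        linarith)
      have h5 := hstep _ t (le_max_left _ _) hle h2 (by
        have := le_max_right s0 (t - δ / 2)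
        linarith) _ h4 x
      rw [int_split (le_max_left s0 (t - δ / 2)) hle (hA.mono_set (Ioc_subset_Ioc_right h2))]
      linarith
  obtain ⟨n, hn⟩ := exists_nat_ge ((t0 - s0) / (δ / 2))
  have := hind n t0 hst0 le_rfl (by rwa [div_le_iff₀ (by positivity)] at hn) x
  refine this.trans ?_
  gcongr
  rw [← hB, div_mul_eq_mul_div, div_le_iff₀ (by positivity)]
  nlinarith

lemma gen_integrable {d : ℕ} {q : ℝ≥0∞} [hq : Fact (1 ≤ q)]
    {a : ℝ → Fin d → Fin d → ℝ} {T : ℝ}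
    (ha_meas : ∀ i j, Measurable fun t => a t i j)
    {u : ℝ → Lp ℝ q (volume : Measure (Fin d → ℝ))}
    (hu : ContinuousOn u (Icc 0 T)) (hA : IntegrableOn (fun t => aMax a t * ‖u t‖) (Ioc 0 T))
    {φ : (Fin d → ℝ) → ℝ} (hφ : ContDiff ℝ (⊤ : ℕ∞) φ) (hs : HasCompactSupport φ) :
    IntegrableOn (fun r => ∑ i, ∑ j, a r i j * ∫ y, u r y * pd i (pd j φ) y) (Ioc 0 T) := by
  refine integrable_finsetSum _ fun i _ => integrable_finsetSum _ fun j _ => ?_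
  have hc := (pd_contDiff (pd_contDiff hφ j) i).continuous
  have hs' := pd_supp (pd_supp hs j) i
  obtain ⟨C, hC0, hC⟩ := pair_shift_bound (q := q) hc hs'
  refine Integrable.mono' (hA.const_mul C) ?_ (Filter.Eventually.of_forall fun r => ?_)
  · refine (ha_meas i j).aestronglyMeasurable.mul ?_
    exact (((pair_cont _ hc hs').comp_continuousOn hu).mono
      Ioc_subset_Icc_self).aestronglyMeasurable measurableSet_Ioc
  · rw [norm_mul, Real.norm_eq_abs, Real.norm_eq_abs]
    have h1 := hC (u r) 0
    simp only [sub_zero] at h1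
    calc _ ≤ aMax a r * (C * ‖u r‖) :=
          mul_le_mul (abs_le_aMax a r i j) h1 (abs_nonneg _) (aMax_nonneg _ _)
      _ = _ := by ring

theorem uniqueness (p T : ℝ) (hp : 1 < p) (hT : 0 < T)
    [Fact (1 ≤ ENNReal.ofReal p)]
    (d : ℕ) (hd : 0 < d)
    (a : ℝ → Fin d → Fin d → ℝ)
    (ha_meas : ∀ i j, Measurable fun t => a t i j)
    (ha_symm : ∀ t ∈ Ioc (0:ℝ) T, ∀ i j, a t i j = a t j i)
    (ha_pos : ∀ t ∈ Ioc (0:ℝ) T, ∀ ξ : Fin d → ℝ,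
      0 ≤ ∑ i, ∑ j, a t i j * ξ i * ξ j)
    (u0 : Lp ℝ (ENNReal.ofReal p) (volume : Measure (Fin d → ℝ)))
    (f u v : ℝ → Lp ℝ (ENNReal.ofReal p) (volume : Measure (Fin d → ℝ)))
    (hf_meas : AEStronglyMeasurable f (volume.restrict (Ioc (0:ℝ) T)))
    (hf_int : IntegrableOn (fun t => ‖f t‖ ^ p) (Ioc (0:ℝ) T))
    (hu_sol : IsWeakSolution (ENNReal.ofReal p) T a u0 f u)
    (hu_cont : ContinuousOn u (Icc (0:ℝ) T))
    (hu_int : IntegrableOn (fun t => aMax a t * ‖u t‖) (Ioc (0:ℝ) T))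
    (hv_sol : IsWeakSolution (ENNReal.ofReal p) T a u0 f v)
    (hv_cont : ContinuousOn v (Icc (0:ℝ) T))
    (hv_int : IntegrableOn (fun t => aMax a t * ‖v t‖) (Ioc (0:ℝ) T)) :
    ∀ t ∈ Icc (0:ℝ) T, u t = v t := by
  set w : ℝ → Lp ℝ (ENNReal.ofReal p) (volume : Measure (Fin d → ℝ)) := fun t => u t - v t with hw
  have hw_cont : ContinuousOn w (Icc 0 T) := hu_cont.sub hv_cont
  have hw_int : IntegrableOn (fun t => aMax a t * ‖w t‖) (Ioc 0 T) := by
    refine Integrable.mono' (hu_int.add hv_int) ?_ (Filter.Eventually.of_forall fun r => ?_)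
    · exact (aMax_meas ha_meas).aestronglyMeasurable.mul
        ((hw_cont.norm.mono Ioc_subset_Icc_self).aestronglyMeasurable measurableSet_Ioc)
    · rw [norm_mul, Real.norm_eq_abs, abs_of_nonneg (aMax_nonneg _ _), norm_norm, Pi.add_apply,
        ← mul_add]
      exact mul_le_mul_of_nonneg_left (norm_sub_le _ _) (aMax_nonneg _ _)
  have hf1 : IntegrableOn f (Ioc 0 T) := by
    refine Integrable.mono' ((integrable_const (1:ℝ)).add hf_int) hf_meas
      (Filter.Eventually.of_forall fun r => ?_)
    rw [Pi.add_apply]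
    have hn : 0 ≤ ‖f r‖ ^ p := by positivity
    rcases le_total ‖f r‖ 1 with h | h
    · linarith
    · have := Real.rpow_le_rpow_of_exponent_le h hp.le
      rw [Real.rpow_one] at this
      linarith
  have hpair_sub : ∀ ψ : (Fin d → ℝ) → ℝ, Continuous ψ → HasCompactSupport ψ → ∀ t,
      ∫ y, w t y * ψ y = (∫ y, u t y * ψ y) - ∫ y, v t y * ψ y := fun ψ hc hs t =>
    (pairL ψ hc hs).map_sub (u t) (v t)
  -- the homogeneous equation for the difference
  have hw0 : ∀ φ : (Fin d → ℝ) → ℝ, ContDiff ℝ (⊤ : ℕ∞) φ → HasCompactSupport φ →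
      ∀ t ∈ Icc 0 T, ∫ y, w t y * φ y =
        ∫ r in Ioc 0 t, ∑ i, ∑ j, a r i j * ∫ y, w r y * pd i (pd j φ) y := by
    intro φ hφ hs t ht
    have hsub : Ioc 0 t ⊆ Ioc 0 T := Ioc_subset_Ioc_right ht.2
    have iu := (gen_integrable ha_meas hu_cont hu_int hφ hs).mono_set hsub
    have iv := (gen_integrable ha_meas hv_cont hv_int hφ hs).mono_set hsub
    have jf : IntegrableOn (fun r => ∫ y, f r y * φ y) (Ioc 0 t) := by
      obtain ⟨C, hC0, hC⟩ := pair_shift_bound (q := ENNReal.ofReal p) hφ.continuous hs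
      refine Integrable.mono' ((hf1.mono_set hsub).norm.const_mul C) ?_
        (Filter.Eventually.of_forall fun r => ?_)
      · exact (pair_cont φ hφ.continuous hs).comp_aestronglyMeasurable
          (hf1.mono_set hsub).aestronglyMeasurable
      · have := hC (f r) 0
        simpa only [sub_zero, Real.norm_eq_abs] using this
    rw [hpair_sub φ hφ.continuous hs, hu_sol φ hφ hs t ht, hv_sol φ hφ hs t ht,
      add_sub_add_left_eq_sub]
    rw [integral_add iu jf, integral_add iv jf, add_sub_add_right_eq_sub, ← integral_sub iu iv]
    congr 1
    ext r
    rw [← Finset.sum_sub_distrib]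
    refine Finset.sum_congr rfl fun i _ => ?_
    rw [← Finset.sum_sub_distrib]
    refine Finset.sum_congr rfl fun j _ => ?_
    rw [hpair_sub _ (pd_contDiff (pd_contDiff hφ j) i).continuous (pd_supp (pd_supp hs j) i),
      mul_sub]
  have hweq : ∀ φ : (Fin d → ℝ) → ℝ, ContDiff ℝ (⊤ : ℕ∞) φ → HasCompactSupport φ →
      ∀ x, ∀ s t, 0 ≤ s → s ≤ t → t ≤ T →
      (∫ y, w t y * φ (y - x)) = (∫ y, w s y * φ (y - x)) +
        ∫ r in Ioc s t, ∑ i, ∑ j, a r i j * ∫ y, w r y * pd i (pd j φ) (y - x) := by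
    intro φ hφ hs x s t h0 h1 h2
    have hφx : ContDiff ℝ (⊤ : ℕ∞) (fun y => φ (y - x)) := hφ.comp (contDiff_id.sub contDiff_const)
    have hsx := shift_supp hs x
    have e1 := hw0 _ hφx hsx t ⟨h0.trans h1, h2⟩
    have e2 := hw0 _ hφx hsx s ⟨h0, h1.trans h2⟩
    have iw := (gen_integrable ha_meas hw_cont hw_int hφx hsx).mono_set (Ioc_subset_Ioc_right h2)
    rw [int_split h0 h1 iw, ← e2] at e1
    simpa only [pd_trans] using e1
  intro t0 ht0
  by_contra hne
  have hwt0 : w t0 ≠ 0 := sub_ne_zero.2 hne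
  have hwz : w 0 = 0 := by
    refine (Lp.eq_zero_iff_ae_eq_zero).2 ?_
    refine ae_eq_zero_of_integral_contDiff_smul_eq_zero
      ((Lp.memLp (w 0)).locallyIntegrable (Fact.out)) fun g hg hgs => ?_
    have := hw0 g hg hgs 0 ⟨le_rfl, hT.le⟩
    simp only [Ioc_self, Measure.restrict_empty, integral_zero_measure] at this
    refine Eq.trans ?_ this
    congr 1
    ext y
    rw [smul_eq_mul, mul_comm]
  -- the last zero before t0
  set S : Set ℝ := Icc 0 t0 ∩ w ⁻¹' {0} with hS
  have hcont0 : ContinuousOn w (Icc 0 t0) := hw_cont.mono (Icc_subset_Icc_right ht0.2)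
  have hSc : IsClosed S := hcont0.preimage_isClosed_of_isClosed isClosed_Icc isClosed_singleton
  have hScomp : IsCompact S := isCompact_Icc.of_isClosed_subset hSc inter_subset_left
  have hSne : S.Nonempty := ⟨0, ⟨le_rfl, ht0.1⟩, hwz⟩
  obtain ⟨t1, ht1S, ht1⟩ := hScomp.exists_isGreatest hSne
  have hwt1 : w t1 = 0 := ht1S.2
  have ht1lt : t1 < t0 := lt_of_le_of_ne ht1S.1.2 fun h => hwt0 (h ▸ hwt1)
  have hnz : ∀ t ∈ Ioc t1 t0, w t ≠ 0 := fun t ht h =>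
    absurd (ht1 ⟨⟨ht1S.1.1.trans ht.1.le, ht.2⟩, h⟩) (not_le.2 ht.1)
  -- integrability of a away from t1
  have hAint : ∀ s ∈ Ioc t1 t0, IntegrableOn (aMax a) (Ioc s t0) := by
    intro s hs
    have hsub : Icc s t0 ⊆ Icc 0 t0 := Icc_subset_Icc_left (ht1S.1.1.trans hs.1.le)
    obtain ⟨z, hz, hzmin⟩ := isCompact_Icc.exists_isMinOn (nonempty_Icc.2 hs.2)
      (hcont0.mono hsub).norm
    have hzpos : 0 < ‖w z‖ := norm_pos_iff.2 (hnz z ⟨hs.1.trans_le hz.1, hz.2⟩)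
    have hI : IntegrableOn (fun t => aMax a t * ‖w t‖) (Ioc s t0) :=
      hw_int.mono_set (Ioc_subset_Ioc (ht1S.1.1.trans hs.1.le) ht0.2)
    refine Integrable.mono' (hI.const_mul (‖w z‖⁻¹)) (aMax_meas ha_meas).aestronglyMeasurable ?_
    filter_upwards [ae_restrict_mem measurableSet_Ioc] with r hr
    rw [Real.norm_eq_abs, abs_of_nonneg (aMax_nonneg _ _)]
    have h1 : ‖w z‖ ≤ ‖w r‖ := hzmin (Ioc_subset_Icc_self hr)
    rw [inv_mul_eq_div, le_div_iff₀ hzpos]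
    exact mul_le_mul_of_nonneg_left h1 (aMax_nonneg _ _)
  -- the sign of all pairings
  have hle : ∀ φ : (Fin d → ℝ) → ℝ, ContDiff ℝ (⊤ : ℕ∞) φ → HasCompactSupport φ →
      ∫ y, w t0 y * φ y ≤ 0 := by
    intro φ hφ hs
    obtain ⟨C, hC0, hC⟩ := pair_shift_bound (q := ENNReal.ofReal p) hφ.continuous hs
    have hb : ∀ s ∈ Ioc t1 t0, ∫ y, w t0 y * φ y ≤ C * ‖w s‖ := by
      intro s hs'
      have hs0 : 0 ≤ s := ht1S.1.1.trans hs'.1.le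
      have hsub : Ioc s t0 ⊆ Ioc 0 T := Ioc_subset_Ioc hs0 ht0.2
      have := max_principle hd hs'.2 ha_meas (fun t ht => ha_symm t (hsub ht))
        (fun t ht => ha_pos t (hsub ht)) (hw_cont.mono (Icc_subset_Icc hs0 ht0.2)) (hAint s hs')
        hφ hs (fun x s' t h1 h2 h3 => hweq φ hφ hs x s' t (hs0.trans h1) h2 (h3.trans ht0.2))
        (C * ‖w s‖) (fun x => (le_abs_self _).trans (hC (w s) x)) 0
      simpa only [sub_zero] using this
    have hlim : Filter.Tendsto (fun s => C * ‖w s‖) (nhdsWithin t1 (Ioc t1 t0)) (nhds 0) := by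
      have h1 : Filter.Tendsto w (nhdsWithin t1 (Ioc t1 t0)) (nhds (w t1)) :=
        (hcont0 t1 ht1S.1).mono_left (nhdsWithin_mono _ fun z hz => ⟨ht1S.1.1.trans hz.1.le, hz.2⟩)
      have h2 := h1.norm.const_mul C
      simpa [hwt1] using h2
    have : (nhdsWithin t1 (Ioc t1 t0)).NeBot := by
      rw [nhdsWithin_Ioc_eq_nhdsGT ht1lt]
      infer_instance
    exact ge_of_tendsto hlim (by filter_upwards [self_mem_nhdsWithin] with s hs' using hb s hs')
  apply hwt0
  refine (Lp.eq_zero_iff_ae_eq_zero).2 ?_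
  refine ae_eq_zero_of_integral_contDiff_smul_eq_zero
    ((Lp.memLp (w t0)).locallyIntegrable (Fact.out)) fun g hg hgs => ?_
  have e : ∫ y, g y • w t0 y = ∫ y, w t0 y * g y := by
    congr 1
    ext y
    rw [smul_eq_mul, mul_comm]
  rw [e]
  have h1 := hle g hg hgs
  have h2 := hle (fun y => - g y) hg.neg hgs.neg
  simp only [mul_neg, integral_neg] at h2
  linarith

end
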